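/- arXiv:math/0208014 — 3 statements merged into one kernel-verified Lean document; each statement's English description precedes it below -/
import Mathlib

section
/- In the max-plus semiring over the reals, for all real numbers γ and δ, the subsemimodule of (ℝ_max)² spanned by the two vectors (γ, 0) and (δ, 0) consists exactly of the vector (−∞, −∞) together with all finite vectors (x₁, x₂) ∈ ℝ² satisfying min(γ, δ) + x₂ ≤ x₁ ≤ x₂ + max(γ, δ). -/
/-!
In `ℝ_max` a linear combination with scalars `l, m` has entries `x = max (l + γ) (m + δ)` and
`y = max l m`, so monotonicity gives `y + min γ δ ≤ x ≤ y + max γ δ`. Conversely, if `γ ≤ δ`, such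
a pair is attained at `l = y` and `m = x - δ`. Both directions take place inside `ℝ_max`, where
the inequalities themselves force `x` and `y` to be both `-∞` or both finite.
-/

section OrderedAddMonoid

variable {M : Type*} [LinearOrder M]

theorem max_add_min_le_max_add_add [Add M] [AddLeftMono M] [AddRightMono M] (l m a b : M) :
    max l m + min a b ≤ max (l + a) (m + b) := by
  rw [max_add]
  exact max_le_max (add_le_add_right (min_le_left a b) l) (add_le_add_right (min_le_right a b) m)

theorem exists_max_add_add_eq_and_max_eq [AddMonoid M] [AddRightMono M] {a b x y : M}
    (hb : IsAddUnit b) (hlower : y + a ≤ x) (hupper : x ≤ y + b) :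
    ∃ l m, x = max (l + a) (m + b) ∧ y = max l m := by
  obtain ⟨c, hbc, hcb⟩ := isAddUnit_iff_exists.mp hb
  have hxc : x + c ≤ y :=
    calc
      x + c ≤ y + b + c := add_le_add_left hupper c
      _ = y := by rw [add_assoc, hbc, add_zero]
  refine ⟨y, x + c, ?_, (max_eq_left hxc).symm⟩
  rw [add_assoc, hcb, add_zero, max_eq_right hlower]

theorem exists_max_add_add_eq_and_max_eq_iff [AddMonoid M] [AddLeftMono M] [AddRightMono M]
    {a b x y : M} (h : IsAddUnit (max a b)) :
    (∃ l m, x = max (l + a) (m + b) ∧ y = max l m) ↔ y + min a b ≤ x ∧ x ≤ y + max a b := by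
  constructor
  · rintro ⟨l, m, rfl, rfl⟩
    exact ⟨max_add_min_le_max_add_add l m a b, max_add_add_le_max_add_max⟩
  · rintro ⟨hlower, hupper⟩
    rcases le_total a b with hab | hba
    · rw [max_eq_right hab] at h hupper
      rw [min_eq_left hab] at hlower
      exact exists_max_add_add_eq_and_max_eq h hlower hupper
    · rw [max_eq_left hba] at h hupper
      rw [min_eq_right hba] at hlower
      obtain ⟨m, l, hx, hy⟩ := exists_max_add_add_eq_and_max_eq h hlower hupper
      exact ⟨l, m, by rwa [max_comm], by rwa [max_comm]⟩

end OrderedAddMonoid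

theorem add_coe_le_and_le_add_coe_iff {M : Type*} [Add M] [LE M] {a b : M} {x y : WithBot M} :
    y + a ≤ x ∧ x ≤ y + b ↔
      (x = ⊥ ∧ y = ⊥) ∨ ∃ x₁ x₂ : M, x = x₁ ∧ y = x₂ ∧ x₂ + a ≤ x₁ ∧ x₁ ≤ x₂ + b := by
  cases x <;> cases y <;> simp [← WithBot.coe_add]

theorem span_two_vectors_maxplus_general {G : Type*} [AddGroup G] [LinearOrder G]
    [AddLeftMono G] [AddRightMono G] (γ δ : G) :
    {x : Fin 2 → WithBot G |
        ∃ lam mu : WithBot G,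
          x 0 = max (lam + (γ : WithBot G)) (mu + (δ : WithBot G)) ∧
          x 1 = max (lam + (0 : WithBot G)) (mu + (0 : WithBot G))} =
      {x | x 0 = ⊥ ∧ x 1 = ⊥} ∪
        {x | ∃ x₁ x₂ : G, x 0 = (x₁ : WithBot G) ∧ x 1 = (x₂ : WithBot G) ∧
          x₂ + min γ δ ≤ x₁ ∧ x₁ ≤ x₂ + max γ δ} := by
  ext x
  have hunit : IsAddUnit (max (γ : WithBot G) δ) :=
    (AddGroup.isAddUnit (max γ δ)).map WithBot.addHom
  simp only [Set.mem_union, Set.mem_ofPred_eq, add_zero]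
  rw [exists_max_add_add_eq_and_max_eq_iff hunit, ← WithBot.coe_min, ← WithBot.coe_max,
    add_coe_le_and_le_add_coe_iff]

/-- in the max-plus semiring `ℝ_max = (ℝ ∪ {−∞}, max, +)`, for all
real `γ, δ`, the subsemimodule of `(ℝ_max)²` spanned by the vectors `(γ, 0)` and
`(δ, 0)` consists of the vector `(−∞, −∞)` together with all finite vectors
`(x₁, x₂) ∈ ℝ²` with `min γ δ + x₂ ≤ x₁ ≤ x₂ + max γ δ`.
Here a max-plus linear combination of the two generators `a, b` is
`λ ⊗ a ⊕ μ ⊗ b`, i.e. entrywise `max (λ + aᵢ) (μ + bᵢ)`, with scalars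
`λ, μ ∈ ℝ ∪ {−∞}` (taking both scalars `−∞` yields the zero vector, so this
describes all finite max-plus linear combinations). -/
theorem span_two_vectors_maxplus (γ δ : ℝ) :
    {x : Fin 2 → WithBot ℝ |
        ∃ lam mu : WithBot ℝ,
          x 0 = max (lam + (γ : WithBot ℝ)) (mu + (δ : WithBot ℝ)) ∧
          x 1 = max (lam + (0 : WithBot ℝ)) (mu + (0 : WithBot ℝ))} =
      {x | x 0 = ⊥ ∧ x 1 = ⊥} ∪
        {x | ∃ x₁ x₂ : ℝ, x 0 = (x₁ : WithBot ℝ) ∧ x 1 = (x₂ : WithBot ℝ) ∧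
          min γ δ + x₂ ≤ x₁ ∧ x₁ ≤ x₂ + max γ δ} := by
  simpa only [add_comm (min γ δ)] using span_two_vectors_maxplus_general γ δ
end

section
/- Sums and Cartesian products of rational semimodules are rational: if X, Y ⊆ S^n and Z ⊆ S^p are rational subsemimodules over an arbitrary semiring S, then X ⊕ Y (the semimodule of sums x ⊕ y with x ∈ X, y ∈ Y) and X × Z (viewed inside S^{n+p}) are rational semimodules. -/
open scoped Pointwise

/-- Rational subsets of a monoid: the smallest class of subsets containing the
finite sets and closed under union, elementwise product, and Kleene star
(submonoid generated). -/
inductive IsRational {M : Type*} [Monoid M] : Set M → Prop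
  | finite (U : Set M) : U.Finite → IsRational U
  | union (U V : Set M) : IsRational U → IsRational V → IsRational (U ∪ V)
  | mul (U V : Set M) : IsRational U → IsRational V → IsRational (U * V)
  | star (U : Set M) : IsRational U → IsRational (Submonoid.closure U : Set M)

/-- The subsemimodule spanned by a set `G`: all finite `S`-linear combinations. -/
def SpanSet (S : Type*) {V : Type*} [Semiring S] [AddCommMonoid V] [Module S V]
    (G : Set V) : Set V :=
  {x | ∃ (k : ℕ) (c : Fin k → S) (u : Fin k → V), (∀ i, u i ∈ G) ∧ x = ∑ i, c i • u i}

/-- A subsemimodule is rational if it is spanned by a rational subset of the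
multiplicative (entrywise) monoid. -/
def IsRatSemimodule {S V : Type*} [Semiring S] [Monoid V] [AddCommMonoid V] [Module S V]
    (X : Set V) : Prop :=
  ∃ G : Set V, IsRational G ∧ X = SpanSet S G

/-!
The union of two generating sets spans the sum. For the product, generate by the union of `G × {0}`
and `{0} × K`; these are rational because `U × V = (U × 1) * (1 × V)`, where `U × 1` and `1 × V`
are images of `U` and `V` under monoid homomorphisms, and homomorphisms preserve rationality.
-/

theorem spanSet_eq_span {S V : Type*} [Semiring S] [AddCommMonoid V] [Module S V] (G : Set V) :
    SpanSet S G = Submodule.span S G := by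
  ext x
  rw [SetLike.mem_coe, Submodule.mem_span_set']
  constructor
  · rintro ⟨k, c, u, hu, rfl⟩
    exact ⟨k, c, fun i ↦ ⟨u i, hu i⟩, rfl⟩
  · rintro ⟨k, c, u, rfl⟩
    exact ⟨k, c, fun i ↦ u i, fun i ↦ (u i).2, rfl⟩

namespace IsRational

variable {M N : Type*} [Monoid M] [Monoid N]

theorem image (f : M →* N) {U : Set M} (hU : IsRational U) : IsRational (f '' U) := by
  induction hU with
  | finite U hU => exact .finite _ (hU.image f)
  | union U V _ _ ihU ihV => rw [Set.image_union]; exact .union _ _ ihU ihV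
  | mul U V _ _ ihU ihV => rw [Set.image_mul]; exact .mul _ _ ihU ihV
  | star U _ ihU =>
    rw [← Submonoid.coe_map, MonoidHom.map_mclosure]
    exact .star _ ihU

theorem prod {U : Set M} {V : Set N} (hU : IsRational U) (hV : IsRational V) :
    IsRational (U ×ˢ V) := by
  have hU' : IsRational (U ×ˢ (1 : Set N)) := by
    rw [← Set.singleton_one, Set.prod_singleton]
    exact hU.image (MonoidHom.inl M N)
  have hV' : IsRational ((1 : Set M) ×ˢ V) := by
    rw [← Set.singleton_one, Set.singleton_prod]
    exact hV.image (MonoidHom.inr M N)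
  have h_factor : U ×ˢ V = (U ×ˢ (1 : Set N)) * ((1 : Set M) ×ˢ V) := by
    rw [Set.prod_mul_prod_comm, mul_one, one_mul]
  rw [h_factor]
  exact .mul _ _ hU' hV'

end IsRational

section Span

variable {S V W : Type*} [Semiring S] [AddCommMonoid V] [Module S V] [AddCommMonoid W] [Module S W]

theorem spanSet_union (G H : Set V) : SpanSet S (G ∪ H) = SpanSet S G + SpanSet S H := by
  simp only [spanSet_eq_span, Submodule.span_union, Submodule.coe_sup]

theorem spanSet_prod_zero_union_zero_prod (G : Set V) (K : Set W) :
    SpanSet S (G ×ˢ {0} ∪ {0} ×ˢ K) = SpanSet S G ×ˢ SpanSet S K := by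
  rw [Set.prod_singleton, Set.singleton_prod]
  simp only [spanSet_eq_span, ← Submodule.prod_coe, ← LinearMap.span_inl_union_inr,
    LinearMap.coe_inl, LinearMap.coe_inr]

end Span

namespace IsRatSemimodule

variable {S V W : Type*} [Semiring S] [Monoid V] [AddCommMonoid V] [Module S V]
  [Monoid W] [AddCommMonoid W] [Module S W]

theorem add {X Y : Set V} (hX : IsRatSemimodule (S := S) X) (hY : IsRatSemimodule (S := S) Y) :
    IsRatSemimodule (S := S) (X + Y) := by
  obtain ⟨G, hG, rfl⟩ := hX
  obtain ⟨H, hH, rfl⟩ := hY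
  exact ⟨G ∪ H, .union _ _ hG hH, (spanSet_union G H).symm⟩

theorem prod {X : Set V} {Z : Set W} (hX : IsRatSemimodule (S := S) X)
    (hZ : IsRatSemimodule (S := S) Z) : IsRatSemimodule (S := S) (X ×ˢ Z) := by
  obtain ⟨G, hG, rfl⟩ := hX
  obtain ⟨K, hK, rfl⟩ := hZ
  have hG' : IsRational (G ×ˢ ({0} : Set W)) := hG.prod (.finite _ (Set.finite_singleton 0))
  have hK' : IsRational (({0} : Set V) ×ˢ K) := .prod (.finite _ (Set.finite_singleton 0)) hK
  exact ⟨_, .union _ _ hG' hK', (spanSet_prod_zero_union_zero_prod G K).symm⟩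

end IsRatSemimodule

theorem sum_and_prod_of_rational_semimodules_general {S V W : Type*} [Semiring S]
    [Monoid V] [AddCommMonoid V] [Module S V] [Monoid W] [AddCommMonoid W] [Module S W]
    {X Y : Set V} {Z : Set W} (hX : IsRatSemimodule (S := S) X)
    (hY : IsRatSemimodule (S := S) Y) (hZ : IsRatSemimodule (S := S) Z) :
    IsRatSemimodule (S := S) (X + Y) ∧ IsRatSemimodule (S := S) (X ×ˢ Z) :=
  ⟨hX.add hY, hX.prod hZ⟩

/-- over an arbitrary semiring `S`, if `X, Y ⊆ S^n` and `Z ⊆ S^p`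
are rational semimodules, then the sum `X ⊕ Y = {x ⊕ y : x ∈ X, y ∈ Y}` and the
Cartesian product `X × Z` (inside `S^{n+p}`) are rational semimodules. Here the
monoid structure used for rationality is the entrywise product `⊗`. -/
theorem sum_and_prod_of_rational_semimodules {S : Type*} [Semiring S] {n p : ℕ}
    (X Y : Set (Fin n → S)) (Z : Set (Fin p → S))
    (hX : IsRatSemimodule (S := S) X) (hY : IsRatSemimodule (S := S) Y)
    (hZ : IsRatSemimodule (S := S) Z) :
    IsRatSemimodule (S := S) (X + Y) ∧ IsRatSemimodule (S := S) (X ×ˢ Z) :=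
  sum_and_prod_of_rational_semimodules_general hX hY hZ
end

section
/- Characterization of rational semimodules via definability: let S be an idempotent commutative semiring with the Presburger property whose natural order is total. A subset X ⊆ S^n is a rational semimodule if and only if X is a subsemimodule of S^n and X is itself a rational subset of the monoid (S^n, ⊗). -/
open scoped Pointwise

/-- First-order (Presburger) formulas of `(S, e, ⊗, ⪯)`: atoms are
`⊗ xᵢ^{kᵢ} ⪯ ⊗ xⱼ^{rⱼ}`, closed under `∧`, `∨`, `¬`, `∃`. -/
inductive PFormula : ℕ → Type
  | atom {n : ℕ} (k r : Fin n → ℕ) : PFormula n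
  | and {n : ℕ} : PFormula n → PFormula n → PFormula n
  | or {n : ℕ} : PFormula n → PFormula n → PFormula n
  | not {n : ℕ} : PFormula n → PFormula n
  | ex {n : ℕ} : PFormula (n + 1) → PFormula n

/-- Satisfaction in an idempotent semiring, where the natural order
`x ⪯ y` is expressed as `x + y = y`. -/
def PFormula.Sat {S : Type*} [CommSemiring S] :
    ∀ {n : ℕ}, PFormula n → (Fin n → S) → Prop
  | _, atom k r, v => (∏ i, v i ^ k i) + (∏ i, v i ^ r i) = ∏ i, v i ^ r i
  | _, and f g, v => f.Sat v ∧ g.Sat v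
  | _, or f g, v => f.Sat v ∨ g.Sat v
  | _, not f, v => ¬ f.Sat v
  | _, ex f, v => ∃ x : S, f.Sat (Fin.cons x v)

/-- A subsemimodule of `S^n` in the sense of the paper: contains the zero
vector and is closed under linear combinations. -/
def IsSubsemimodule {S : Type*} [Semiring S] {n : ℕ} (X : Set (Fin n → S)) : Prop :=
  (0 : Fin n → S) ∈ X ∧ ∀ x ∈ X, ∀ y ∈ X, ∀ a b : S, a • x + b • y ∈ X

theorem isSubsemimodule_iff_exists_submodule {S : Type*} [Semiring S] {n : ℕ}
    {X : Set (Fin n → S)} :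
    IsSubsemimodule X ↔ ∃ N : Submodule S (Fin n → S), (N : Set (Fin n → S)) = X := by
  constructor
  · rintro ⟨hzero, hcomb⟩
    refine ⟨⟨⟨⟨X, fun {x y} hx hy => ?_⟩, hzero⟩, fun a x hx => ?_⟩, rfl⟩
    · simpa using hcomb x hx y hy 1 1
    · simpa using hcomb x hx x hx a 0
  · rintro ⟨N, rfl⟩
    exact ⟨N.zero_mem, fun x hx y hy a b => N.add_mem (N.smul_mem a hx) (N.smul_mem b hy)⟩

theorem IsSubsemimodule.spanSet_eq {S : Type*} [Semiring S] {n : ℕ} {X : Set (Fin n → S)}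
    (hX : IsSubsemimodule X) : SpanSet S X = X := by
  obtain ⟨N, rfl⟩ := isSubsemimodule_iff_exists_submodule.1 hX
  rw [spanSet_eq_span, Submodule.span_eq]

section TotalOrder

variable {S κ ι : Type*} [IdemSemiring S] [Std.Total (α := S) (· ≤ ·)]

theorem le_add_iff_of_total {a b c : S} : a ≤ b + c ↔ a ≤ b ∨ a ≤ c := by
  rcases Std.Total.total (r := (· ≤ ·)) b c with hbc | hcb
  · rw [add_eq_right_iff_le.2 hbc, or_iff_right_of_imp (·.trans hbc)]
  · rw [add_eq_left_iff_le.2 hcb, or_iff_left_of_imp (·.trans hcb)]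

theorem isGreatest_range_sum [Fintype κ] [Nonempty κ] (y : κ → S) :
    IsGreatest (Set.range y) (∑ k, y k) := by
  have le_sum (k : κ) : y k ≤ ∑ k, y k :=
    Finset.single_le_sum_of_canonicallyOrdered (Finset.mem_univ k)
  obtain ⟨k₀, hk₀⟩ := (Std.Total.directed (r := (· ≤ ·)) y).finset_le Finset.univ
  have sum_le : ∑ k, y k ≤ y k₀ :=
    Finset.sum_induction y (· ≤ y k₀) (fun _ _ => add_le) zero_le hk₀
  exact ⟨⟨k₀, (le_sum k₀).antisymm sum_le⟩, Set.forall_mem_range.2 le_sum⟩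

theorem exists_sum_comp_eq_sum [Fintype κ] [Nonempty κ] [Fintype ι] (w : κ → ι → S) :
    ∃ φ : ι → κ, ∑ i, w (φ i) = ∑ k, w k := by
  have attained (l : ι) : ∃ k, w k l = ∑ k, w k l := (isGreatest_range_sum fun k => w k l).1
  choose φ hφ using attained
  refine ⟨φ, funext fun l => ?_⟩
  have : Nonempty ι := ⟨l⟩
  simp only [Finset.sum_apply]
  refine (isGreatest_range_sum fun i => w (φ i) l).unique
    ⟨⟨l, hφ l⟩, Set.forall_mem_range.2 fun i => ?_⟩
  exact (isGreatest_range_sum fun k => w k l).2 ⟨φ i, rfl⟩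

theorem span_eq_sum_insert_zero_univ_smul [Fintype ι] (G : Set (ι → S)) :
    (Submodule.span S G : Set (ι → S)) =
      ∑ _ : ι, insert 0 ((Set.univ : Set S) • G) := by
  ext x
  rw [Set.mem_fintype_sum, SetLike.mem_coe]
  constructor
  · rw [Submodule.mem_span_set']
    rintro ⟨k, c, u, rfl⟩
    cases isEmpty_or_nonempty (Fin k)
    · exact ⟨0, fun _ => Set.mem_insert 0 _, by simp⟩
    · obtain ⟨φ, hφ⟩ := exists_sum_comp_eq_sum fun i => c i • (u i : ι → S)
      exact ⟨_, fun i => Or.inr (Set.smul_mem_smul (Set.mem_univ _) (u (φ i)).2), hφ⟩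
  · rintro ⟨w, hw, rfl⟩
    refine Submodule.sum_mem _ fun i _ => ?_
    obtain hi | ⟨c, -, g, hg, hi⟩ := hw i
    · exact hi ▸ Submodule.zero_mem _
    · exact hi ▸ Submodule.smul_mem _ c (Submodule.subset_span hg)

end TotalOrder

section Monomials

variable {M ι κ : Type*} [CommMonoid M]

theorem prod_pow_sum_fiber [Fintype ι] [Fintype κ] [DecidableEq κ] (σ : ι → κ) (k : ι → ℕ)
    (v : κ → M) : ∏ j, v j ^ (∑ i with σ i = j, k i) = ∏ i, v (σ i) ^ k i := by
  simp_rw [← Finset.prod_pow_eq_pow_sum]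
  rw [← Finset.prod_fiberwise Finset.univ σ]
  refine Finset.prod_congr rfl fun j _ => Finset.prod_congr rfl fun i hi => ?_
  rw [(Finset.mem_filter.1 hi).2]

theorem prod_pow_single [Fintype ι] [DecidableEq ι] (v : ι → M) (i : ι) :
    ∏ j, v j ^ (Pi.single i 1 : ι → ℕ) j = v i := by
  simp [Pi.single_apply]

end Monomials

namespace PFormula

/-- Substitution of the variable `σ i` for the free variable `i`. Variables may be identified, so
the exponents in an atom are summed along the fibres of `σ`. -/
def rename : {n : ℕ} → PFormula n → {m : ℕ} → (Fin n → Fin m) → PFormula m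
  | _, atom k r, _, σ => atom (fun j => ∑ i with σ i = j, k i) (fun j => ∑ i with σ i = j, r i)
  | _, and f g, _, σ => and (f.rename σ) (g.rename σ)
  | _, or f g, _, σ => or (f.rename σ) (g.rename σ)
  | _, not f, _, σ => not (f.rename σ)
  | _, ex f, _, σ => ex (f.rename (Fin.cons 0 (Fin.succ ∘ σ)))

theorem sat_rename {S : Type*} [CommSemiring S] {n m : ℕ} (f : PFormula n) (σ : Fin n → Fin m)
    (v : Fin m → S) : (f.rename σ).Sat v ↔ f.Sat (v ∘ σ) := by
  induction f generalizing m with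
  | atom k r => simp only [rename, Sat, prod_pow_sum_fiber, Function.comp_apply]
  | and f g ihf ihg => simp only [rename, Sat, ihf, ihg]
  | or f g ihf ihg => simp only [rename, Sat, ihf, ihg]
  | not f ih => simp only [rename, Sat, ih]
  | ex f ih =>
    have cons_comp (x : S) : Fin.cons x v ∘ Fin.cons 0 (Fin.succ ∘ σ) = Fin.cons x (v ∘ σ) := by
      rw [Fin.comp_cons]
      rfl
    simp only [rename, Sat, ih, cons_comp]

end PFormula

/-- First-order definability of a subset of `S^n` in the structure `(S, e, ⊗, ⪯)`. -/
def IsPresburgerDefinable {S : Type*} [CommSemiring S] {n : ℕ} (D : Set (Fin n → S)) : Prop :=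
  ∃ f : PFormula n, D = {v | f.Sat v}

namespace IsPresburgerDefinable

section CommSemiring

variable {S : Type*} [CommSemiring S] {n m : ℕ}

theorem inter {D E : Set (Fin n → S)} (hD : IsPresburgerDefinable D)
    (hE : IsPresburgerDefinable E) : IsPresburgerDefinable (D ∩ E) := by
  obtain ⟨f, rfl⟩ := hD
  obtain ⟨g, rfl⟩ := hE
  exact ⟨.and f g, rfl⟩

theorem union {D E : Set (Fin n → S)} (hD : IsPresburgerDefinable D)
    (hE : IsPresburgerDefinable E) : IsPresburgerDefinable (D ∪ E) := by
  obtain ⟨f, rfl⟩ := hD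
  obtain ⟨g, rfl⟩ := hE
  exact ⟨.or f g, rfl⟩

theorem compl {D : Set (Fin n → S)} (hD : IsPresburgerDefinable D) :
    IsPresburgerDefinable Dᶜ := by
  obtain ⟨f, rfl⟩ := hD
  exact ⟨.not f, rfl⟩

theorem preimage_comp {D : Set (Fin n → S)} (hD : IsPresburgerDefinable D) (σ : Fin n → Fin m) :
    IsPresburgerDefinable {v : Fin m → S | v ∘ σ ∈ D} := by
  obtain ⟨f, rfl⟩ := hD
  exact ⟨f.rename σ, Set.ext fun v => (f.sat_rename σ v).symm⟩

theorem exists_cons {D : Set (Fin (n + 1) → S)} (hD : IsPresburgerDefinable D) :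
    IsPresburgerDefinable {v : Fin n → S | ∃ x : S, Fin.cons x v ∈ D} := by
  obtain ⟨f, rfl⟩ := hD
  exact ⟨.ex f, rfl⟩

-- Quantifying over all placements `σ`, `τ` of the two blocks of variables in a common context
-- avoids numbering the variables, and lets nested quantifiers be peeled off one block at a time.
theorem exists_pi {p : ℕ} {P : (Fin n → S) → (Fin p → S) → Prop}
    (hP : ∀ {m : ℕ} (σ : Fin n → Fin m) (τ : Fin p → Fin m),
      IsPresburgerDefinable {v : Fin m → S | P (v ∘ σ) (v ∘ τ)}) :
    IsPresburgerDefinable {v | ∃ w, P v w} := by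
  induction p generalizing n with
  | zero =>
    simpa only [Fin.exists_fin_zero_pi, Function.comp_id,
      Subsingleton.elim _ (finZeroElim : Fin 0 → S)] using hP id finZeroElim
  | succ p ih =>
    have h : IsPresburgerDefinable
        {v : Fin (n + 1) → S | ∃ w, P (Fin.tail v) (Fin.cons (v 0) w)} :=
      ih fun σ τ => by simpa only [Fin.comp_cons] using! hP (Fin.tail σ) (Fin.cons (σ 0) τ)
    simp only [Fin.exists_fin_succ_pi]
    exact h.exists_cons

theorem univ : IsPresburgerDefinable (Set.univ : Set (Fin n → S)) := by
  have h : IsPresburgerDefinable {v : Fin n → S | (PFormula.atom 0 0).Sat v} := ⟨_, rfl⟩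
  simpa only [Set.union_compl_self] using h.union h.compl

theorem setOf_forall {ι : Type*} [Finite ι] {P : ι → (Fin n → S) → Prop}
    (hP : ∀ i, IsPresburgerDefinable {v | P i v}) : IsPresburgerDefinable {v | ∀ i, P i v} := by
  have := Fintype.ofFinite ι
  rw [Set.ofPred_forall, ← Set.iInf_eq_iInter, ← Finset.inf_univ_eq_iInf]
  exact Finset.inf_induction univ (fun _ hD _ hE => hD.inter hE) fun i _ => hP i

end CommSemiring

section IdemCommSemiring

variable {S : Type*} [IdemCommSemiring S] {n : ℕ}

theorem setOf_prod_pow_le (k r : Fin n → ℕ) :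
    IsPresburgerDefinable {v : Fin n → S | ∏ i, v i ^ k i ≤ ∏ i, v i ^ r i} :=
  ⟨.atom k r, by simp only [PFormula.Sat, add_eq_right_iff_le]⟩

theorem setOf_prod_pow_eq (k r : Fin n → ℕ) :
    IsPresburgerDefinable {v : Fin n → S | ∏ i, v i ^ k i = ∏ i, v i ^ r i} := by
  simp only [le_antisymm_iff]
  exact (setOf_prod_pow_le k r).inter (setOf_prod_pow_le r k)

theorem setOf_le (i j : Fin n) : IsPresburgerDefinable {v : Fin n → S | v i ≤ v j} := by
  simpa only [prod_pow_single] using setOf_prod_pow_le (S := S) (Pi.single i 1) (Pi.single j 1)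

theorem setOf_eq_mul (i j k : Fin n) :
    IsPresburgerDefinable {v : Fin n → S | v i = v j * v k} := by
  simpa only [pow_add, Finset.prod_mul_distrib, prod_pow_single] using
    setOf_prod_pow_eq (S := S) (Pi.single i 1)
      (fun l => (Pi.single j 1 : Fin n → ℕ) l + (Pi.single k 1 : Fin n → ℕ) l)

theorem setOf_eq_zero (i : Fin n) : IsPresburgerDefinable {v : Fin n → S | v i = 0} := by
  have eq_zero_iff (v : Fin n → S) : v i = 0 ↔ ¬ ∃ x, ¬ v i ≤ x := by
    rw [not_exists_not, ← nonpos_iff_eq_zero]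
    exact ⟨fun h x => h.trans zero_le, fun h => h 0⟩
  simp only [eq_zero_iff]
  exact (setOf_le i.succ 0).compl.exists_cons.compl

theorem singleton_zero : IsPresburgerDefinable ({0} : Set (Fin n → S)) := by
  have singleton_eq : ({0} : Set (Fin n → S)) = {v | ∀ i, v i = 0} := by
    ext v
    simp [funext_iff]
  rw [singleton_eq]
  exact setOf_forall setOf_eq_zero

theorem univ_smul {G : Set (Fin n → S)} (hG : IsPresburgerDefinable G) :
    IsPresburgerDefinable ((Set.univ : Set S) • G) := by
  have smul_eq : (Set.univ : Set S) • G =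
      {v | ∃ c, Fin.cons c v ∈ {z : Fin (n + 1) → S | ∃ g, g ∈ G ∧ ∀ i, z i.succ = z 0 * g i}} := by
    ext v
    simp [Set.mem_smul, funext_iff, eq_comm]
  rw [smul_eq]
  refine exists_cons (exists_pi fun σ τ => (hG.preimage_comp τ).inter ?_)
  exact setOf_forall fun i => setOf_eq_mul (σ i.succ) (σ 0) (τ i)

variable [Std.Total (α := S) (· ≤ ·)]

theorem setOf_eq_add (i j k : Fin n) :
    IsPresburgerDefinable {v : Fin n → S | v i = v j + v k} := by
  have eq_add_iff (v : Fin n → S) :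
      v i = v j + v k ↔ (v i ≤ v j ∨ v i ≤ v k) ∧ v j ≤ v i ∧ v k ≤ v i := by
    rw [le_antisymm_iff, add_le_iff, le_add_iff_of_total]
  simp only [eq_add_iff]
  exact ((setOf_le i j).union (setOf_le i k)).inter ((setOf_le j i).inter (setOf_le k i))

theorem add {A B : Set (Fin n → S)} (hA : IsPresburgerDefinable A)
    (hB : IsPresburgerDefinable B) : IsPresburgerDefinable (A + B) := by
  have add_eq : A + B = {v | ∃ a b, a ∈ A ∧ b ∈ B ∧ ∀ i, v i = a i + b i} := by
    ext v
    simp [Set.mem_add, funext_iff, eq_comm]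
  rw [add_eq]
  refine exists_pi fun σ τ => exists_pi fun σ' τ' =>
    (hA.preimage_comp (σ' ∘ τ)).inter ((hB.preimage_comp τ').inter ?_)
  exact setOf_forall fun i => setOf_eq_add (σ' (σ i)) (σ' (τ i)) (τ' i)

theorem span {G : Set (Fin n → S)} (hG : IsPresburgerDefinable G) :
    IsPresburgerDefinable (Submodule.span S G : Set (Fin n → S)) := by
  rw [span_eq_sum_insert_zero_univ_smul]
  exact Finset.sum_induction _ IsPresburgerDefinable (fun _ _ => add) singleton_zero
    fun _ _ => singleton_zero.union hG.univ_smul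

end IdemCommSemiring

end IsPresburgerDefinable

theorem rational_semimodule_iff_rational_set_general {S : Type*} [IdemCommSemiring S]
    [Std.Total (α := S) (· ≤ ·)] {n : ℕ}
    (hpres : ∀ D : Set (Fin n → S), IsPresburgerDefinable D ↔ IsRational D)
    (X : Set (Fin n → S)) :
    (∃ G : Set (Fin n → S), IsRational G ∧ X = SpanSet S G) ↔
      (IsSubsemimodule X ∧ IsRational X) := by
  constructor
  · rintro ⟨G, hG, rfl⟩
    rw [spanSet_eq_span]
    exact ⟨isSubsemimodule_iff_exists_submodule.2 ⟨_, rfl⟩,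
      (hpres _).1 ((hpres G).2 hG).span⟩
  · rintro ⟨hX, hX_rat⟩
    exact ⟨X, hX_rat, hX.spanSet_eq.symm⟩

/-- let `S` be an idempotent commutative semiring whose natural
order is total and which has the Presburger property (definable sets of `S^n`
coincide with rational subsets of `(S^n, ⊗)`). Then `X ⊆ S^n` is a rational
semimodule (spanned by a rational set) iff `X` is a subsemimodule of `S^n`
and itself a rational subset of the monoid `(S^n, ⊗)`. -/
theorem rational_semimodule_iff_rational_set {S : Type*} [CommSemiring S]
    (hid : ∀ a : S, a + a = a)
    (htot : ∀ x y : S, x + y = y ∨ x + y = x)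
    (hpres : ∀ (m : ℕ) (D : Set (Fin m → S)),
      (∃ f : PFormula m, D = {v | f.Sat v}) ↔ IsRational D)
    {n : ℕ} (X : Set (Fin n → S)) :
    (∃ G : Set (Fin n → S), IsRational G ∧ X = SpanSet S G) ↔
      (IsSubsemimodule X ∧ IsRational X) := by
  let : IdemCommSemiring S := { ‹CommSemiring S›, IdemSemiring.ofSemiring hid with }
  have : Std.Total (α := S) (· ≤ ·) :=
    ⟨fun x y => (htot x y).imp_right fun h => (add_comm y x).trans h⟩
  exact rational_semimodule_iff_rational_set_general (hpres n) X
end
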